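/- Let ω ∈ ℝ^k, let C ⊂ U be compact, and let u ∈ H¹_ω(𝕋^k;ℝ^m) take values almost everywhere in C and satisfy the weak variational identity ∫_{𝕋^k} [ ( g(u(φ)) D_ω u(φ) , D_ω h(φ) + Γ_{u(φ)}(D_ω u(φ), h(φ)) ) + ( W'_x(φ, u(φ)) , h(φ) ) ] dφ = 0 for every smooth h: 𝕋^k → ℝ^m. Then there is a representative ũ of u (equal to u almost everywhere) such that for almost every φ ∈ 𝕋^k the function t ↦ ũ(φ + tω) takes values in C, is twice continuously differentiable on all of ℝ, and is a classical solution of the Euler–Lagrange equations ẍ + Γ_x(ẋ,ẋ) = g(x)⁻¹ W'_x(φ+tω, x) for every t ∈ ℝ. (Single-chart form of the paper's Proposition that a weak quasiperiodic solution restricts to classical solutions along almost every trajectory of the linear flow.) -/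

import Mathlib

/-!
Write `P = g(u) D_ω u` for the momentum and `F = ½ ∂g(u)(D_ω u, D_ω u) + W'_x(φ,u)` for the force.
The part of the Christoffel symbol that survives in `(g a, Γ(a,b))` is `½ ∂_i g(a,a) b^i`, so the
variational identity says that `F` is the weak `D_ω`-derivative of `P`, just as `D_ω u` is that of
`u`. Since `u` stays in a compact set and `D_ω u ∈ L²`, all these functions are integrable on the
torus, `F` being only in `L¹`.

Testing with periodizations of compactly supported functions moves the weak identities from the
torus to `ℝ^k`. There a weak `D_ω`-derivative integrates along the flow: for each `t`,
`f(φ+tω) = f(φ) + ∫₀ᵗ G(φ+sω) ds` for a.e. `φ`, and by Fubini this holds for a.e. `t` on almost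
every orbit.

On such an orbit, `u` and `P` agree a.e. with absolutely continuous functions `x` and `p`, and
`p = g(x)ẋ` a.e. Hence `ẋ = g(x)⁻¹p` is continuous, so the force is continuous and `p` is `C¹`, so
`x` is `C²`; differentiating `p = g(x)ẋ` yields the equations.

The representative takes at `φ` the value at time `0` of the continuous function that agrees a.e.
with `t ↦ u(φ+tω)`. That function is unique, so this choice is consistent along orbits and
periodic.
-/

open MeasureTheory Real Set

/-- Directional derivative `D_ω f(φ) := (d/dt)|_{t=0} f(φ + tω)`. -/
noncomputable def dirDeriv {k : ℕ} {E : Type*} [NormedAddCommGroup E] [NormedSpace ℝ E]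
    (ω : Fin k → ℝ) (f : (Fin k → ℝ) → E) (φ : Fin k → ℝ) : E :=
  deriv (fun t : ℝ => f (φ + t • ω)) 0

/-- A function on `ℝ^k` represents a function on the torus `𝕋^k = ℝ^k/(2πℤ^k)`
if it is `2π`-periodic in every coordinate. -/
def TorusPer {k : ℕ} {E : Type*} (f : (Fin k → ℝ) → E) : Prop :=
  ∀ (φ : Fin k → ℝ) (n : Fin k → ℤ), f (φ + fun i => 2 * Real.pi * (n i : ℝ)) = f φ

/-- Fundamental domain `[0,2π]^k` of the torus `𝕋^k`. -/
def torusBox (k : ℕ) : Set (Fin k → ℝ) := Set.Icc 0 (fun _ => 2 * Real.pi)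

/-- Euclidean dot product on `ℝ^n`. -/
def dotp {n : ℕ} (a b : Fin n → ℝ) : ℝ := ∑ i, a i * b i

/-- Euclidean partial derivative `∂_j f(x)`. -/
noncomputable def pd {m : ℕ} (f : (Fin m → ℝ) → ℝ) (x : Fin m → ℝ) (j : Fin m) : ℝ :=
  fderiv ℝ f x (Pi.single j 1)

/-- The Christoffel bilinear map of a metric tensor `g`:
`Γ_x(a,b)^i = ½ Σ_{j,k,l} (g(x)⁻¹)^{il}(∂_j g_{lk}(x) + ∂_k g_{jl}(x) − ∂_l g_{jk}(x)) a^j b^k`. -/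
noncomputable def christoffel {m : ℕ} (g : (Fin m → ℝ) → Matrix (Fin m) (Fin m) ℝ)
    (x a b : Fin m → ℝ) : Fin m → ℝ :=
  fun i => (1 / 2) * ∑ l, (g x)⁻¹ i l *
    ∑ j, ∑ k, (pd (fun y => g y l k) x j + pd (fun y => g y j l) x k
      - pd (fun y => g y j k) x l) * a j * b k

/-- Euclidean partial gradient `W'_x(φ,x)` of a force function `W(φ,·)`. -/
noncomputable def gradW {k m : ℕ} (W : (Fin k → ℝ) → (Fin m → ℝ) → ℝ)
    (φ : Fin k → ℝ) (x : Fin m → ℝ) : Fin m → ℝ :=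
  fun i => fderiv ℝ (W φ) x (Pi.single i 1)

open Bornology Function
open scoped Matrix Pointwise Topology

section Periodization

variable {ι E F : Type*} [NormedAddCommGroup E] [NormedSpace ℝ E]

/-- Invariance under the lattice spanned by the basis `b`, so that `f` represents a function on
the torus `E ⧸ span ℤ (range b)`. -/
def IsLatticePeriodic (b : Module.Basis ι ℝ E) (f : E → F) : Prop :=
  ∀ (v : Submodule.span ℤ (range b)) (x : E), f (v +ᵥ x) = f x

/-- The sum of all lattice translates of `η`. It turns a compactly supported test function on `E`
into a test function on the torus. -/
noncomputable def periodization [AddCommMonoid F] (b : Module.Basis ι ℝ E) (η : E → F)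
    (x : E) : F :=
  ∑ᶠ v : Submodule.span ℤ (range b), η (v +ᵥ x)

theorem isLatticePeriodic_periodization [AddCommMonoid F] (b : Module.Basis ι ℝ E) (η : E → F) :
    IsLatticePeriodic b (periodization b η) := fun w x => by
  unfold periodization
  simp_rw [← add_vadd]
  exact finsum_comp_equiv (Equiv.addRight w) (f := fun v => η (v +ᵥ x))

variable [Finite ι] {b : Module.Basis ι ℝ E}

theorem exists_finset_forall_vadd_notMem (b : Module.Basis ι ℝ E) {K S : Set E} (hK : IsBounded K)
    (hS : IsBounded S) :
    ∃ s : Finset (Submodule.span ℤ (range b)), ∀ v ∉ s, ∀ x ∈ K, v +ᵥ x ∉ S := by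
  have : FiniteDimensional ℝ E := b.finiteDimensional_of_finite
  have : ProperSpace E := FiniteDimensional.proper ℝ E
  have hfin : {v : Submodule.span ℤ (range b) | (v : E) ∈ S - K}.Finite :=
    .of_finite_image ((ZSpan.setFinite_inter b (hS.sub hK)).subset
      (image_subset_iff.2 fun v hv => ⟨hv, v.2⟩)) Subtype.val_injective.injOn
  refine ⟨hfin.toFinset, fun v hv x hx hvx => hv (hfin.mem_toFinset.2 ?_)⟩
  exact ⟨_, hvx, x, hx, add_sub_cancel_right _ _⟩

theorem exists_finset_periodization_eq_sum [AddCommMonoid F] (b : Module.Basis ι ℝ E) {K S : Set E}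
    (hK : IsBounded K) (hS : IsBounded S) :
    ∃ s : Finset (Submodule.span ℤ (range b)), ∀ η : E → F, support η ⊆ S →
      ∀ x ∈ K, periodization b η x = ∑ v ∈ s, η (v +ᵥ x) := by
  obtain ⟨s, hs⟩ := exists_finset_forall_vadd_notMem b hK hS
  refine ⟨s, fun η hη x hx => finsum_eq_sum_of_support_subset _ fun v hv => ?_⟩
  by_contra hvs
  exact hs v hvs x hx (hη hv)

variable [NormedAddCommGroup F]

theorem IsLatticePeriodic.locallyIntegrable [MeasurableSpace E] [BorelSpace E] {μ : Measure E}
    [μ.IsAddHaarMeasure] {f : E → F} (hf : IsLatticePeriodic b f)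
    (hfi : IntegrableOn f (ZSpan.fundamentalDomain b) μ) : LocallyIntegrable f μ := by
  have : FiniteDimensional ℝ E := b.finiteDimensional_of_finite
  have : ProperSpace E := FiniteDimensional.proper ℝ E
  refine (locallyIntegrable_iff).2 fun K hK => ?_
  obtain ⟨s, hs⟩ := exists_finset_forall_vadd_notMem b hK.isBounded
    (ZSpan.fundamentalDomain_isBounded b)
  have hcover : K ⊆ ⋃ v ∈ s, (v +ᵥ ·) ⁻¹' ZSpan.fundamentalDomain b := fun x hx => by
    obtain ⟨v, hv, -⟩ := ZSpan.exist_unique_vadd_mem_fundamentalDomain b x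
    refine mem_iUnion₂.2 ⟨v, ?_, hv⟩
    by_contra hvs
    exact hs v hvs x hx hv
  refine IntegrableOn.mono_set ((integrableOn_finset_iUnion).2 fun v _ => ?_) hcover
  have hshift := ((measurePreserving_add_left μ (v : E)).restrict_preimage
    (ZSpan.fundamentalDomain_measurableSet b)).integrable_comp_of_integrable hfi
  exact hshift.congr (.of_forall (hf v))

variable [NormedSpace ℝ F]

theorem contDiff_periodization {n : WithTop ℕ∞} {η : E → F} (hη : ContDiff ℝ n η)
    (hηc : HasCompactSupport η) : ContDiff ℝ n (periodization b η) := by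
  refine contDiff_iff_contDiffAt.2 fun x => ?_
  obtain ⟨s, hs⟩ := exists_finset_periodization_eq_sum (F := F) b
    (Metric.isBounded_ball (x := x) (r := 1)) hηc.isCompact.isBounded
  refine ContDiffAt.congr_of_eventuallyEq (f := fun y => ∑ v ∈ s, η (v +ᵥ y)) ?_
    (Filter.eventually_of_mem (Metric.ball_mem_nhds x one_pos) (hs η (subset_tsupport η)))
  exact ContDiffAt.sum fun v _ => (hη.comp (contDiff_const.add contDiff_id)).contDiffAt

theorem fderiv_periodization_apply {η : E → F} (hη : Differentiable ℝ η)
    (hηc : HasCompactSupport η) (x w : E) :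
    fderiv ℝ (periodization b η) x w = periodization b (fun y => fderiv ℝ η y w) x := by
  obtain ⟨s, hs⟩ := exists_finset_periodization_eq_sum (F := F) b
    (Metric.isBounded_ball (x := x) (r := 1)) hηc.isCompact.isBounded
  have hsupp : support (fun y => fderiv ℝ η y w) ⊆ tsupport η := fun y hy =>
    support_fderiv_subset ℝ fun h => hy (by simp [h])
  have hloc : periodization b η =ᶠ[𝓝 x] fun y => ∑ v ∈ s, η (v +ᵥ y) :=
    Filter.eventually_of_mem (Metric.ball_mem_nhds x one_pos) (hs η (subset_tsupport η))
  have htrans : ∀ v ∈ s, HasFDerivAt (fun y => η (v +ᵥ y)) (fderiv ℝ η (v +ᵥ x)) x := fun v _ =>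
    (hasFDerivAt_comp_add_left (v : E)).2 (hη _).hasFDerivAt
  rw [hs _ hsupp x (Metric.mem_ball_self one_pos), hloc.fderiv_eq,
    (HasFDerivAt.fun_sum htrans).fderiv, sum_apply]

theorem setIntegral_periodization_smul [MeasurableSpace E] [BorelSpace E] {μ : Measure E}
    [μ.IsAddHaarMeasure] {η : E → ℝ} {f : E → F} (hη : Continuous η)
    (hηc : HasCompactSupport η) (hf : IsLatticePeriodic b f) (hfi : LocallyIntegrable f μ) :
    ∫ x in ZSpan.fundamentalDomain b, periodization b η x • f x ∂μ = ∫ x, η x • f x ∂μ := by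
  have hint : Integrable (fun x => η x • f x) μ :=
    hfi.integrable_smul_left_of_hasCompactSupport hη hηc
  obtain ⟨s, hs⟩ := exists_finset_forall_vadd_notMem b (ZSpan.fundamentalDomain_isBounded b)
    hηc.isCompact.isBounded
  have hzero : ∀ v ∉ s, ∀ x ∈ ZSpan.fundamentalDomain b, η (v +ᵥ x) = 0 := fun v hv x hx =>
    image_eq_zero_of_notMem_tsupport (hs v hv x hx)
  have hsum : ∀ x ∈ ZSpan.fundamentalDomain b,
      periodization b η x • f x = ∑ v ∈ s, η (v +ᵥ x) • f (v +ᵥ x) := fun x hx => by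
    simp_rw [hf _ x, ← Finset.sum_smul]
    congr 1
    refine finsum_eq_sum_of_support_subset _ fun v hv => ?_
    by_contra hvs
    exact hv (hzero v hvs x hx)
  have hD := ZSpan.fundamentalDomain_measurableSet b
  have : VAddInvariantMeasure (Submodule.span ℤ (range b)) E μ :=
    ⟨fun v t _ => measure_preimage_add μ (v : E) t⟩
  rw [(ZSpan.isAddFundamentalDomain b μ).integral_eq_tsum'' _ hint, setIntegral_congr_fun hD hsum,
    integral_finsetSum _ fun v _ => ?_, tsum_eq_sum fun v hv => ?_]
  · refine setIntegral_eq_zero_of_forall_eq_zero fun x hx => ?_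
    rw [hzero v hv x hx, zero_smul]
  · exact ((measurePreserving_add_left μ (v : E)).integrable_comp_of_integrable hint).integrableOn

end Periodization

section Flow

variable {E F : Type*} [NormedAddCommGroup E] [MeasurableSpace E] [BorelSpace E] {μ : Measure E}
  [NormedAddCommGroup F] {f : E → F}

theorem locallyIntegrable_comp_add_right [μ.IsAddRightInvariant] (hf : LocallyIntegrable f μ)
    (a : E) : LocallyIntegrable (fun x => f (x + a)) μ := by
  have := locallyIntegrable_map_homeomorph (Homeomorph.addRight a) (f := f) (μ := μ)
  rw [Homeomorph.coe_addRight, (measurePreserving_add_right μ a).map_eq] at this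
  exact this.1 hf

variable [NormedSpace ℝ E] [FiniteDimensional ℝ E] [μ.IsAddHaarMeasure]

theorem measurePreserving_shear (ν : Measure ℝ) [SFinite ν] (ω : E) :
    MeasurePreserving (fun z : ℝ × E => (z.1, z.2 + z.1 • ω)) (ν.prod μ) (ν.prod μ) :=
  MeasurePreserving.skew_product (.id ν) (g := fun s x => x + s • ω) (by fun_prop)
    (.of_forall fun s => (measurePreserving_add_right μ (s • ω)).map_eq)

theorem ae_ae_flow {p : E → Prop} (hp : ∀ᵐ x ∂μ, p x) (ω : E) :
    ∀ᵐ x ∂μ, ∀ᵐ t : ℝ, p (x + t • ω) :=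
  Measure.ae_ae_of_ae_prod <| (Measure.quasiMeasurePreserving_snd.comp <|
    (measurePreserving_shear volume ω).quasiMeasurePreserving.comp
      Measure.measurePreserving_swap.quasiMeasurePreserving).ae hp

theorem integrable_flow (hf : LocallyIntegrable f μ) (ω : E) {I : Set ℝ} {K : Set E}
    (hI : IsBounded I) (hIm : MeasurableSet I) (hK : IsCompact K) :
    Integrable (fun z : ℝ × E => f (z.2 + z.1 • ω)) ((volume.restrict I).prod (μ.restrict K)) := by
  set K' := (fun z : ℝ × E => z.2 + z.1 • ω) '' closure I ×ˢ K
  have hK' : IsCompact K' := (hI.isCompact_closure.prod hK).image (by fun_prop)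
  have : Fact (volume I < ⊤) := ⟨hI.measure_lt_top⟩
  have hfi : Integrable (fun z : ℝ × E => f z.2) ((volume.restrict I).prod (μ.restrict K')) :=
    Integrable.comp_snd (hf.integrableOn_isCompact hK') _
  rw [Measure.prod_restrict] at hfi ⊢
  exact IntegrableOn.mono_set (((measurePreserving_shear volume ω).restrict_preimage
    (hIm.prod hK'.measurableSet)).integrable_comp_of_integrable hfi)
    fun z hz => ⟨hz.1, z, ⟨subset_closure hz.1, hz.2⟩, rfl⟩

theorem ae_locallyIntegrable_flow (hf : LocallyIntegrable f μ) (ω : E) :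
    ∀ᵐ x ∂μ, LocallyIntegrable fun s : ℝ => f (x + s • ω) := by
  have hballs : ∀ n : ℕ, ∀ᵐ x ∂μ, x ∈ Metric.closedBall (0 : E) n →
      IntegrableOn (fun s : ℝ => f (x + s • ω)) (Metric.closedBall 0 n) := fun n => by
    rw [← ae_restrict_iff' measurableSet_closedBall]
    exact (integrable_flow hf ω Metric.isBounded_closedBall measurableSet_closedBall
      (isCompact_closedBall 0 _)).prod_left_ae
  filter_upwards [ae_all_iff.2 hballs] with x hx
  refine locallyIntegrable_iff.2 fun K hK => ?_
  obtain ⟨R, hR⟩ := hK.isBounded.subset_closedBall 0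
  obtain ⟨n, hn⟩ := exists_nat_ge (max R ‖x‖)
  refine (hx n ?_).mono_set (hR.trans (Metric.closedBall_subset_closedBall (le_of_max_le_left hn)))
  exact mem_closedBall_zero_iff.2 (le_of_max_le_right hn)

theorem isBounded_uIoc (a b : ℝ) : IsBounded (uIoc a b) :=
  isCompact_uIcc.isBounded.subset uIoc_subset_uIcc

variable [NormedSpace ℝ F]

theorem locallyIntegrable_intervalIntegral_flow (hf : LocallyIntegrable f μ) (ω : E) (a b : ℝ) :
    LocallyIntegrable (fun x => ∫ s in a..b, f (x + s • ω)) μ := by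
  refine locallyIntegrable_iff.2 fun K hK => ?_
  simp_rw [intervalIntegral.intervalIntegral_eq_integral_uIoc]
  exact ((integrable_flow hf ω (isBounded_uIoc a b) measurableSet_uIoc hK).integral_prod_right).smul
    (if a ≤ b then (1 : ℝ) else -1)

-- Rescaling to the fixed interval `[0,1]` makes this an ordinary parametric integral.
theorem stronglyMeasurable_intervalIntegral_flow (hf : StronglyMeasurable f) (ω : E) :
    StronglyMeasurable fun z : ℝ × E => ∫ s in (0 : ℝ)..z.1, f (z.2 + s • ω) := by
  have hscale : ∀ z : ℝ × E, ∫ s in (0 : ℝ)..z.1, f (z.2 + s • ω)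
      = z.1 • ∫ r in Ioc (0 : ℝ) 1, f (z.2 + (z.1 * r) • ω) := fun z => by
    rw [← intervalIntegral.integral_of_le zero_le_one,
      intervalIntegral.smul_integral_comp_mul_left fun s => f (z.2 + s • ω), mul_zero, mul_one]
  simp_rw [hscale]
  refine measurable_fst.stronglyMeasurable.smul (StronglyMeasurable.integral_prod_right
    (f := fun (z : ℝ × E) (r : ℝ) => f (z.2 + (z.1 * r) • ω)) ?_)
  exact hf.comp_measurable (by fun_prop)

variable {η : E → ℝ}

theorem integrable_smul_flow (hη : Continuous η) (hηc : HasCompactSupport η)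
    (hf : LocallyIntegrable f μ) (ω : E) (a b : ℝ) :
    Integrable (fun z : ℝ × E => η z.2 • f (z.2 + z.1 • ω))
      ((volume.restrict (uIoc a b)).prod μ) := by
  obtain ⟨M, hM⟩ := hη.bounded_above_of_compact_support hηc
  have hint : Integrable (fun z : ℝ × E => η z.2 • f (z.2 + z.1 • ω))
      ((volume.restrict (uIoc a b)).prod (μ.restrict (tsupport η))) :=
    (integrable_flow hf ω (isBounded_uIoc a b) measurableSet_uIoc hηc).bdd_smul M
      (hη.comp continuous_snd).aestronglyMeasurable (.of_forall fun z => hM z.2)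
  rw [← Measure.restrict_univ (μ := volume.restrict (uIoc a b)), Measure.prod_restrict] at hint
  refine (integrableOn_iff_integrable_of_support_subset fun z hz => ?_).1 hint
  by_contra hzη
  rw [mem_prod, and_iff_right (mem_univ _)] at hzη
  exact hz (by simp only [image_eq_zero_of_notMem_tsupport hzη, zero_smul])

theorem intervalIntegral_integral_smul (hη : Continuous η) (hηc : HasCompactSupport η)
    (hf : LocallyIntegrable f μ) (ω : E) (a b : ℝ) :
    ∫ s in a..b, ∫ x, η (x - s • ω) • f x ∂μ = ∫ x, η x • (∫ s in a..b, f (x + s • ω)) ∂μ := by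
  have hshift : ∀ s : ℝ, ∫ x, η (x - s • ω) • f x ∂μ = ∫ x, η x • f (x + s • ω) ∂μ := fun s => by
    rw [← integral_add_right_eq_self _ (s • ω)]
    simp only [add_sub_cancel_right]
  simp_rw [hshift]
  rw [intervalIntegral_integral_swap (integrable_smul_flow hη hηc hf ω a b)]
  simp_rw [intervalIntegral.integral_smul]

theorem integral_intervalIntegral_smul [CompleteSpace F] (hη : Continuous η)
    (hηc : HasCompactSupport η) (hf : LocallyIntegrable f μ) (ω : E) (a b : ℝ) :
    ∫ x, (∫ s in a..b, η (x - s • ω)) • f x ∂μ = ∫ s in a..b, ∫ x, η (x - s • ω) • f x ∂μ := by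
  have hint : Integrable (fun z : ℝ × E => η (z.2 - z.1 • ω) • f z.2)
      ((volume.restrict (uIoc a b)).prod μ) := by
    simpa [comp_def, ← sub_eq_add_neg] using
      (measurePreserving_shear _ (-ω)).integrable_comp_of_integrable
        (integrable_smul_flow hη hηc hf ω a b)
  rw [intervalIntegral_integral_swap hint]
  simp_rw [intervalIntegral.integral_smul_const]

end Flow

section WeakDirDeriv

variable {E F : Type*} [NormedAddCommGroup E] [NormedSpace ℝ E]

theorem intervalIntegral_fderiv_sub {η : E → ℝ} (hη : ContDiff ℝ 1 η) (ω x : E) (t : ℝ) :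
    ∫ s in (0 : ℝ)..t, fderiv ℝ η (x - s • ω) ω = η x - η (x - t • ω) := by
  have hderiv : ∀ s : ℝ,
      HasDerivAt (fun s : ℝ => -η (x - s • ω)) (fderiv ℝ η (x - s • ω) ω) s := fun s => by
    have hline : HasDerivAt (fun s : ℝ => x - s • ω) (-ω) s := by
      simpa using ((hasDerivAt_id s).smul_const ω).const_sub x
    simpa using
      ((hη.differentiable one_ne_zero _).hasFDerivAt.comp_hasDerivAt s hline).fun_neg
  have hcont : Continuous fun s : ℝ => fderiv ℝ η (x - s • ω) ω :=
    ((hη.continuous_fderiv one_ne_zero).comp (by fun_prop)).clm_apply continuous_const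
  rw [intervalIntegral.integral_eq_sub_of_hasDerivAt (fun s _ => hderiv s)
    (hcont.intervalIntegrable _ _), zero_smul, sub_zero, neg_sub_neg]

variable [MeasurableSpace E] [NormedAddCommGroup F] [NormedSpace ℝ F]

/-- `G` is the weak derivative of `f` along `ω`, in the sense of distributions on `E`. -/
structure HasWeakDirDeriv (μ : Measure E) (ω : E) (f G : E → F) : Prop where
  locallyIntegrable : LocallyIntegrable f μ
  locallyIntegrable_deriv : LocallyIntegrable G μ
  integral_fderiv_smul : ∀ η : E → ℝ, ContDiff ℝ (⊤ : ℕ∞) η → HasCompactSupport η →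
    ∫ x, fderiv ℝ η x ω • f x ∂μ = -∫ x, η x • G x ∂μ

namespace HasWeakDirDeriv

variable {μ : Measure E} {ω : E} {f G : E → F}

theorem congr_ae (h : HasWeakDirDeriv μ ω f G) {f' G' : E → F} (hf : f =ᵐ[μ] f')
    (hG : G =ᵐ[μ] G') : HasWeakDirDeriv μ ω f' G' where
  locallyIntegrable := h.locallyIntegrable.congr hf
  locallyIntegrable_deriv := h.locallyIntegrable_deriv.congr hG
  integral_fderiv_smul η hη hηc := by
    rw [← integral_congr_ae (hf.mono fun x hx => congrArg (fderiv ℝ η x ω • ·) hx),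
      ← integral_congr_ae (hG.mono fun x hx => congrArg (η x • ·) hx),
      h.integral_fderiv_smul η hη hηc]

theorem integral_fderiv_sub_smul [FiniteDimensional ℝ E] (h : HasWeakDirDeriv μ ω f G) {η : E → ℝ}
    (hη : ContDiff ℝ (⊤ : ℕ∞) η) (hηc : HasCompactSupport η) (a : E) :
    ∫ x, fderiv ℝ η (x - a) ω • f x ∂μ = -∫ x, η (x - a) • G x ∂μ := by
  simpa only [fderiv_comp_sub] using h.integral_fderiv_smul (fun x => η (x - a))
    (hη.comp (contDiff_id.sub contDiff_const)) (hηc.comp_homeomorph (Homeomorph.subRight a))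

variable [FiniteDimensional ℝ E] [BorelSpace E] [μ.IsAddHaarMeasure] [CompleteSpace F]

theorem integral_smul_intervalIntegral (h : HasWeakDirDeriv μ ω f G) {η : E → ℝ}
    (hη : ContDiff ℝ (⊤ : ℕ∞) η) (hηc : HasCompactSupport η) (t : ℝ) :
    ∫ x, η x • (∫ s in (0 : ℝ)..t, G (x + s • ω)) ∂μ
      = ∫ x, η x • f (x + t • ω) ∂μ - ∫ x, η x • f x ∂μ := by
  have hη1 : ContDiff ℝ 1 η := hη.of_le (by simp)
  have hη' : Continuous fun x => fderiv ℝ η x ω :=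
    (hη1.continuous_fderiv one_ne_zero).clm_apply continuous_const
  have hηf : ∀ a, Integrable (fun x => η (x - a) • f x) μ := fun a =>
    h.locallyIntegrable.integrable_smul_left_of_hasCompactSupport
      (hη.continuous.comp (continuous_sub_right a)) (hηc.comp_homeomorph (Homeomorph.subRight a))
  calc ∫ x, η x • (∫ s in (0 : ℝ)..t, G (x + s • ω)) ∂μ
      = ∫ s in (0 : ℝ)..t, ∫ x, η (x - s • ω) • G x ∂μ :=
        (intervalIntegral_integral_smul hη.continuous hηc h.locallyIntegrable_deriv ω 0 t).symm
    _ = -∫ s in (0 : ℝ)..t, ∫ x, fderiv ℝ η (x - s • ω) ω • f x ∂μ := by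
        simp_rw [h.integral_fderiv_sub_smul hη hηc, intervalIntegral.integral_neg, neg_neg]
    _ = -∫ x, (η x - η (x - t • ω)) • f x ∂μ := by
        rw [← integral_intervalIntegral_smul hη' (hηc.fderiv_apply ℝ ω) h.locallyIntegrable ω 0 t]
        simp_rw [intervalIntegral_fderiv_sub hη1]
    _ = ∫ x, η (x - t • ω) • f x ∂μ - ∫ x, η x • f x ∂μ := by
        simp_rw [sub_smul]
        rw [integral_sub (by simpa using hηf 0) (hηf _), neg_sub]
    _ = ∫ x, η x • f (x + t • ω) ∂μ - ∫ x, η x • f x ∂μ := by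
        rw [← integral_add_right_eq_self _ (t • ω)]
        simp only [add_sub_cancel_right]

theorem ae_add_smul_eq (h : HasWeakDirDeriv μ ω f G) (t : ℝ) :
    ∀ᵐ x ∂μ, f (x + t • ω) = f x + ∫ s in (0 : ℝ)..t, G (x + s • ω) := by
  have hft := locallyIntegrable_comp_add_right h.locallyIntegrable (t • ω)
  have hGt := locallyIntegrable_intervalIntegral_flow h.locallyIntegrable_deriv ω 0 t
  have hsub : ∀ᵐ x ∂μ, f (x + t • ω) - f x = ∫ s in (0 : ℝ)..t, G (x + s • ω) := by
    refine ae_eq_of_integral_contDiff_smul_eq (hft.sub h.locallyIntegrable) hGt fun η hη hηc => ?_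
    have hint : ∀ {q : E → F}, LocallyIntegrable q μ → Integrable (fun x => η x • q x) μ :=
      fun hq => hq.integrable_smul_left_of_hasCompactSupport hη.continuous hηc
    simp_rw [smul_sub]
    rw [integral_sub (hint hft) (hint h.locallyIntegrable),
      h.integral_smul_intervalIntegral hη hηc]
  exact hsub.mono fun x hx => sub_eq_iff_eq_add'.1 hx

theorem ae_ae_add_smul_eq_of_stronglyMeasurable (h : HasWeakDirDeriv μ ω f G)
    (hf : StronglyMeasurable f) (hG : StronglyMeasurable G) :
    ∀ᵐ x ∂μ, ∀ᵐ t : ℝ, f (x + t • ω) = f x + ∫ s in (0 : ℝ)..t, G (x + s • ω) := by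
  have hmeas : MeasurableSet {z : ℝ × E |
      f (z.2 + z.1 • ω) = f z.2 + ∫ s in (0 : ℝ)..z.1, G (z.2 + s • ω)} :=
    (hf.comp_measurable (by fun_prop)).measurableSet_eq_fun
      ((hf.comp_measurable measurable_snd).add (stronglyMeasurable_intervalIntegral_flow hG ω))
  exact (Measure.ae_ae_comm hmeas).1 (.of_forall h.ae_add_smul_eq)

theorem ae_ae_add_smul_eq (h : HasWeakDirDeriv μ ω f G) :
    ∀ᵐ x ∂μ, ∀ᵐ t : ℝ, f (x + t • ω) = f x + ∫ s in (0 : ℝ)..t, G (x + s • ω) := by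
  obtain ⟨f', hf', hff'⟩ := h.locallyIntegrable.aestronglyMeasurable
  obtain ⟨G', hG', hGG'⟩ := h.locallyIntegrable_deriv.aestronglyMeasurable
  filter_upwards [(h.congr_ae hff' hGG').ae_ae_add_smul_eq_of_stronglyMeasurable hf' hG', hff',
    ae_ae_flow hff' ω, ae_ae_flow hGG' ω] with x hx hfx hfω hGω
  filter_upwards [hx, hfω] with t ht hft
  rw [hft, ht, hfx, intervalIntegral.integral_congr_ae (hGω.mono fun s hs _ => hs)]

end HasWeakDirDeriv
end WeakDirDeriv

section IndefiniteIntegral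

variable {F : Type*} [NormedAddCommGroup F] [NormedSpace ℝ F]

/-- `y` is an indefinite integral of `v`, i.e. it is locally absolutely continuous with a.e.
derivative `v`. -/
structure IsIndefiniteIntegral (v y : ℝ → F) : Prop where
  locallyIntegrable : LocallyIntegrable v
  eq_add_integral : ∀ t, y t = y 0 + ∫ s in (0 : ℝ)..t, v s

namespace IsIndefiniteIntegral

variable {v y q : ℝ → F}

theorem continuous (h : IsIndefiniteIntegral v y) : Continuous y := by
  rw [funext h.eq_add_integral]
  exact continuous_const.add
    (intervalIntegral.continuous_primitive (fun _ _ =>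
      (h.locallyIntegrable.integrableOn_isCompact isCompact_uIcc).intervalIntegrable) 0)

theorem hasDerivAt_of_ae_eq [CompleteSpace F] (h : IsIndefiniteIntegral v y) (hq : Continuous q)
    (hvq : v =ᵐ[volume] q) (t : ℝ) : HasDerivAt y (q t) t := by
  have hy : y = fun t => y 0 + ∫ s in (0 : ℝ)..t, q s := funext fun t => by
    rw [h.eq_add_integral t, intervalIntegral.integral_congr_ae (hvq.mono fun s hs _ => hs)]
  rw [hy]
  exact (hq.integral_hasStrictDerivAt 0 t).hasDerivAt.const_add _

theorem contDiff_succ_of_ae_eq [CompleteSpace F] {n : ℕ} (h : IsIndefiniteIntegral v y)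
    (hq : ContDiff ℝ n q) (hvq : v =ᵐ[volume] q) : ContDiff ℝ (n + 1) y := by
  have hy := h.hasDerivAt_of_ae_eq hq.continuous hvq
  refine contDiff_succ_iff_deriv.2 ⟨fun t => (hy t).differentiableAt, by simp, ?_⟩
  rwa [funext fun t => (hy t).deriv]

end IsIndefiniteIntegral

theorem HasWeakDirDeriv.ae_exists_isIndefiniteIntegral {E : Type*} [NormedAddCommGroup E]
    [NormedSpace ℝ E] [FiniteDimensional ℝ E] [MeasurableSpace E] [BorelSpace E] {μ : Measure E}
    [μ.IsAddHaarMeasure] [CompleteSpace F] {ω : E} {f G : E → F} (h : HasWeakDirDeriv μ ω f G) :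
    ∀ᵐ x ∂μ, ∃ y : ℝ → F, IsIndefiniteIntegral (fun t => G (x + t • ω)) y ∧ y 0 = f x ∧
      (fun t => f (x + t • ω)) =ᵐ[volume] y := by
  filter_upwards [h.ae_ae_add_smul_eq, ae_locallyIntegrable_flow h.locallyIntegrable_deriv ω]
    with x hx hGx
  exact ⟨fun t => f x + ∫ s in (0 : ℝ)..t, G (x + s • ω), ⟨hGx, fun t => by simp⟩, by simp, hx⟩

end IndefiniteIntegral

section ContinuousRep

variable {E F : Type*} [TopologicalSpace F]

theorem forall_mem_of_ae_mem {S : Set F} (hS : IsClosed S)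
    {y : ℝ → F} (hy : Continuous y) (h : ∀ᵐ t, y t ∈ S) (t : ℝ) : y t ∈ S :=
  (hS.preimage hy).closure_subset (Measure.dense_of_ae h t)

open Classical in
/-- The continuous function that agrees with `f` almost everywhere, or `f` itself if there is
none. -/
noncomputable def continuousRep (f : ℝ → F) : ℝ → F :=
  if h : ∃ y : ℝ → F, Continuous y ∧ f =ᵐ[volume] y then h.choose else f

theorem continuousRep_eq [T2Space F] {f y : ℝ → F} (hy : Continuous y) (hfy : f =ᵐ[volume] y) :
    continuousRep f = y := by
  have h : ∃ y : ℝ → F, Continuous y ∧ f =ᵐ[volume] y := ⟨y, hy, hfy⟩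
  rw [continuousRep, dif_pos h, ← h.choose_spec.1.ae_eq_iff_eq volume hy]
  exact h.choose_spec.2.symm.trans hfy

variable [AddCommGroup E] [Module ℝ E]

/-- The precise representative of `u` along the flow `φ ↦ φ + t • ω`: it takes at `φ` the value at
time `0` of the continuous representative of the orbit `t ↦ u (φ + t • ω)`. -/
noncomputable def flowRep (ω : E) (u : E → F) (φ : E) : F :=
  continuousRep (fun t : ℝ => u (φ + t • ω)) 0

theorem flowRep_add_smul [T2Space F] {ω φ : E} {u : E → F} {y : ℝ → F} (hy : Continuous y)
    (hu : (fun t : ℝ => u (φ + t • ω)) =ᵐ[volume] y) (t : ℝ) : flowRep ω u (φ + t • ω) = y t := by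
  have hshift : (fun s : ℝ => u (φ + t • ω + s • ω)) =ᵐ[volume] fun s => y (t + s) := by
    simp_rw [add_assoc, ← add_smul]
    exact (measurePreserving_add_left volume t).quasiMeasurePreserving.ae_eq_comp hu
  rw [flowRep, continuousRep_eq (by fun_prop) hshift]
  simp only [add_zero]

theorem flowRep_add_of_periodic {ω a : E} {u : E → F} (hu : ∀ φ, u (φ + a) = u φ) (φ : E) :
    flowRep ω u (φ + a) = flowRep ω u φ := by
  simp only [flowRep, add_right_comm φ a, hu]

end ContinuousRep

section MatrixCalculus

theorem hasDerivAt_mulVec {ι κ : Type*} [Finite ι] [Fintype κ] {A : ℝ → Matrix ι κ ℝ}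
    {A' : Matrix ι κ ℝ} {v : ℝ → κ → ℝ} {v' : κ → ℝ} {t : ℝ}
    (hA : ∀ i j, HasDerivAt (fun s => A s i j) (A' i j) t) (hv : HasDerivAt v v' t) :
    HasDerivAt (fun s => A s *ᵥ v s) (A' *ᵥ v t + A t *ᵥ v') t := by
  cases nonempty_fintype ι
  refine hasDerivAt_pi.2 fun i => ?_
  simp only [Pi.add_apply, Matrix.mulVec, dotProduct, ← Finset.sum_add_distrib]
  exact HasDerivAt.fun_sum fun j _ => (hA i j).mul (hasDerivAt_pi.1 hv j)

variable {X ι : Type*} [NormedAddCommGroup X] [NormedSpace ℝ X] [Fintype ι] [DecidableEq ι]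
  {n : WithTop ℕ∞} {A : X → Matrix ι ι ℝ}

theorem contDiff_det (hA : ∀ i j, ContDiff ℝ n fun y => A y i j) :
    ContDiff ℝ n fun y => (A y).det := by
  simp_rw [Matrix.det_apply]
  exact ContDiff.sum fun σ _ => (contDiff_prod fun i _ => hA (σ i) i).const_smul _

theorem contDiff_mulVec_inv {p : X → ι → ℝ} (hA : ∀ i j, ContDiff ℝ n fun y => A y i j)
    (hdet : ∀ y, IsUnit (A y).det) (hp : ContDiff ℝ n p) :
    ContDiff ℝ n fun y => (A y)⁻¹ *ᵥ p y := by
  have hadj : ∀ i j, ContDiff ℝ n fun y => (A y).adjugate i j := fun i j => by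
    simp_rw [Matrix.adjugate_apply]
    refine contDiff_det fun k l => ?_
    by_cases hk : k = j
    · simpa only [Matrix.updateRow_apply, if_pos hk] using contDiff_const
    · simpa only [Matrix.updateRow_apply, if_neg hk] using hA k l
  refine contDiff_pi.2 fun i => ?_
  simp_rw [Matrix.inv_def, Ring.inverse_eq_inv', Matrix.smul_mulVec, Pi.smul_apply, smul_eq_mul,
    Matrix.mulVec, dotProduct]
  exact ((contDiff_det hA).inv fun y => (hdet y).ne_zero).mul
    (ContDiff.sum fun j _ => (hadj i j).mul (contDiff_pi.1 hp j))

end MatrixCalculus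

section Christoffel

variable {m : ℕ} {g : (Fin m → ℝ) → Matrix (Fin m) (Fin m) ℝ} {x : Fin m → ℝ}

/-- The `x`-gradient of the kinetic energy `½ (g(x) a, a)` at velocity `a`. -/
noncomputable def kineticGrad (g : (Fin m → ℝ) → Matrix (Fin m) (Fin m) ℝ) (x a : Fin m → ℝ) :
    Fin m → ℝ :=
  fun i => (1 / 2) * ∑ j, ∑ l, pd (fun y => g y j l) x i * a j * a l

/-- The Christoffel symbols of the first kind contracted with `a` and `b`, i.e. `g(x) Γ_x(a,b)`. -/
noncomputable def christoffelFirstKind (g : (Fin m → ℝ) → Matrix (Fin m) (Fin m) ℝ)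
    (x a b : Fin m → ℝ) : Fin m → ℝ :=
  fun l => (1 / 2) * ∑ j, ∑ k, (pd (fun y => g y l k) x j + pd (fun y => g y j l) x k
    - pd (fun y => g y j k) x l) * a j * b k

theorem christoffel_eq_mulVec (g : (Fin m → ℝ) → Matrix (Fin m) (Fin m) ℝ) (x a b : Fin m → ℝ) :
    christoffel g x a b = (g x)⁻¹ *ᵥ christoffelFirstKind g x a b := by
  ext i
  simp only [christoffel, christoffelFirstKind, Matrix.mulVec, dotProduct, Finset.mul_sum]
  refine Finset.sum_congr rfl fun l _ => Finset.sum_congr rfl fun j _ =>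
    Finset.sum_congr rfl fun k _ => by ring

-- Two of the three terms of the Christoffel symbol are exchanged by `j ↔ l` and cancel.
theorem dotp_christoffelFirstKind (g : (Fin m → ℝ) → Matrix (Fin m) (Fin m) ℝ)
    (x a b : Fin m → ℝ) :
    dotp a (christoffelFirstKind g x a b) = dotp (kineticGrad g x a) b := by
  set P : Fin m → Fin m → Fin m → ℝ := fun l j k => pd (fun y => g y l k) x j * a l * a j * b k
  set Q : Fin m → Fin m → Fin m → ℝ := fun l j k => pd (fun y => g y j l) x k * a j * a l * b k
  have hsplit : dotp a (christoffelFirstKind g x a b)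
      = (1 / 2) * (∑ l, ∑ j, ∑ k, P l j k + ∑ l, ∑ j, ∑ k, Q l j k
        - ∑ l, ∑ j, ∑ k, P j l k) := by
    simp only [dotp, christoffelFirstKind, Finset.mul_sum, ← Finset.sum_add_distrib,
      ← Finset.sum_sub_distrib, P, Q]
    refine Finset.sum_congr rfl fun l _ => Finset.sum_congr rfl fun j _ =>
      Finset.sum_congr rfl fun k _ => by ring
  have hkin : dotp (kineticGrad g x a) b = (1 / 2) * ∑ l, ∑ j, ∑ k, Q l j k := by
    have hk : ∑ l, ∑ j, ∑ k, Q l j k = ∑ k, ∑ j, ∑ l, Q l j k :=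
      Finset.sum_comm.trans <|
        (Finset.sum_congr rfl fun j _ => Finset.sum_comm).trans Finset.sum_comm
    rw [hk]
    simp only [dotp, kineticGrad, Finset.mul_sum, Finset.sum_mul, Q]
    refine Finset.sum_congr rfl fun l _ => Finset.sum_congr rfl fun j _ =>
      Finset.sum_congr rfl fun k _ => by ring
  rw [hsplit, hkin, Finset.sum_comm (f := fun l j => ∑ k, P j l k), add_sub_cancel_left]

theorem dotp_mulVec_christoffel (hsymm : (g x).IsSymm) (hdet : IsUnit (g x).det)
    (a b : Fin m → ℝ) :
    dotp (g x *ᵥ a) (christoffel g x a b) = dotp (kineticGrad g x a) b := by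
  rw [← dotp_christoffelFirstKind]
  change (g x *ᵥ a) ⬝ᵥ _ = a ⬝ᵥ _
  rw [christoffel_eq_mulVec, Matrix.dotProduct_mulVec, ← Matrix.mulVec_transpose,
    Matrix.transpose_nonsing_inv, hsymm.eq, Matrix.mulVec_mulVec, Matrix.nonsing_inv_mul _ hdet,
    Matrix.one_mulVec]

theorem sum_pd_mul (f : (Fin m → ℝ) → ℝ) (x a : Fin m → ℝ) :
    ∑ j, pd f x j * a j = fderiv ℝ f x a := by
  conv_rhs => rw [pi_eq_sum_univ' a]
  simp only [map_sum, map_smul, smul_eq_mul, pd, mul_comm]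

theorem pd_symm (hsymm : ∀ᶠ y in 𝓝 x, (g y).IsSymm) (i j l : Fin m) :
    pd (fun y => g y i j) x l = pd (fun y => g y j i) x l := by
  have hij : (fun y => g y i j) =ᶠ[𝓝 x] fun y => g y j i := hsymm.mono fun y hy => hy.apply j i
  rw [pd, pd, hij.fderiv_eq]

theorem christoffelFirstKind_self (hsymm : ∀ᶠ y in 𝓝 x, (g y).IsSymm) (a : Fin m → ℝ) :
    christoffelFirstKind g x a a
      = Matrix.of (fun i j => fderiv ℝ (fun y => g y i j) x a) *ᵥ a - kineticGrad g x a := by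
  ext i
  have hfd : ∑ j, fderiv ℝ (fun y => g y i j) x a * a j
      = (1 / 2) * (∑ j, ∑ k, pd (fun y => g y i k) x j * a j * a k
        + ∑ j, ∑ k, pd (fun y => g y j i) x k * a j * a k) := by
    simp_rw [pd_symm hsymm _ i, ← sum_pd_mul, Finset.sum_mul]
    rw [Finset.sum_comm (f := fun j k => pd (fun y => g y i k) x j * a j * a k)]
    simp only [mul_right_comm]
    ring
  simp only [Pi.sub_apply, Matrix.mulVec, dotProduct, Matrix.of_apply, hfd, christoffelFirstKind,
    kineticGrad, sub_mul, add_mul, Finset.sum_sub_distrib, Finset.sum_add_distrib]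
  ring

end Christoffel

section EulerLagrange

variable {m : ℕ} {g : (Fin m → ℝ) → Matrix (Fin m) (Fin m) ℝ} {U : Set (Fin m → ℝ)}
  {x p v F w : ℝ → Fin m → ℝ}

theorem deriv_deriv_add_christoffel {t : ℝ} {w : Fin m → ℝ}
    (hg : ∀ i j, DifferentiableAt ℝ (fun y => g y i j) (x t))
    (hsymm : ∀ᶠ y in 𝓝 (x t), (g y).IsSymm) (hdet : IsUnit (g (x t)).det)
    (hx : DifferentiableAt ℝ x t) (hx' : DifferentiableAt ℝ (deriv x) t)
    (h : HasDerivAt (fun s => g (x s) *ᵥ deriv x s) (kineticGrad g (x t) (deriv x t) + w) t) :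
    deriv (deriv x) t + christoffel g (x t) (deriv x t) (deriv x t) = (g (x t))⁻¹ *ᵥ w := by
  have hmom := hasDerivAt_mulVec (A := fun s => g (x s))
    (A' := Matrix.of fun i j => fderiv ℝ (fun y => g y i j) (x t) (deriv x t))
    (fun i j => (hg i j).hasFDerivAt.comp_hasDerivAt t hx.hasDerivAt) hx'.hasDerivAt
  have hbalance : g (x t) *ᵥ deriv (deriv x) t
      + christoffelFirstKind g (x t) (deriv x t) (deriv x t) = w := by
    rw [christoffelFirstKind_self hsymm, ← add_sub_assoc, sub_eq_iff_eq_add', h.unique hmom,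
      add_comm]
  rw [christoffel_eq_mulVec, ← hbalance, Matrix.mulVec_add, Matrix.mulVec_mulVec,
    Matrix.nonsing_inv_mul _ hdet, Matrix.one_mulVec]

theorem continuousOn_pd (hU : IsOpen U) {f : (Fin m → ℝ) → ℝ} (hf : ContDiffOn ℝ 1 f U)
    (j : Fin m) : ContinuousOn (fun y => pd f y j) U :=
  (hf.continuousOn_fderiv_of_isOpen hU le_rfl).clm_apply continuousOn_const

theorem continuous_kineticGrad_comp (hU : IsOpen U)
    (hg : ∀ i j, ContDiffOn ℝ 1 (fun y => g y i j) U) {q : ℝ → Fin m → ℝ} (hx : Continuous x)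
    (hxU : ∀ t, x t ∈ U) (hq : Continuous q) : Continuous fun t => kineticGrad g (x t) (q t) := by
  refine continuous_pi fun i => continuous_const.mul ?_
  refine continuous_finsetSum _ fun j _ => continuous_finsetSum _ fun l _ => ?_
  have hpd := (continuousOn_pd hU (hg j l) i).comp_continuous hx hxU
  fun_prop

theorem contDiff_two_and_hasDerivAt_momentum (hU : IsOpen U)
    (hg : ∀ i j, ContDiffOn ℝ 1 (fun y => g y i j) U) (hdet : ∀ y ∈ U, IsUnit (g y).det)
    (hx : IsIndefiniteIntegral v x) (hp : IsIndefiniteIntegral F p) (hxU : ∀ t, x t ∈ U)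
    (hw : Continuous w) (hpv : p =ᵐ[volume] fun t => g (x t) *ᵥ v t)
    (hF : F =ᵐ[volume] fun t => kineticGrad g (x t) (v t) + w t) :
    ContDiff ℝ 2 x ∧ ∀ t, HasDerivAt (fun t => g (x t) *ᵥ deriv x t)
      (kineticGrad g (x t) (deriv x t) + w t) t := by
  set q : ℝ → Fin m → ℝ := fun t => (g (x t))⁻¹ *ᵥ p t
  have hq_contDiff : ∀ n : ℕ, n ≤ 1 → ContDiff ℝ n x → ContDiff ℝ n p → ContDiff ℝ n q :=
    fun n hn hxn hpn => contDiff_mulVec_inv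
      (fun i j => ((hg i j).of_le (by exact_mod_cast hn)).comp_contDiff hxn hxU)
      (fun t => hdet _ (hxU t)) hpn
  have hvq : v =ᵐ[volume] q := hpv.mono fun t ht => by
    simp only [q, ht, Matrix.mulVec_mulVec, Matrix.nonsing_inv_mul _ (hdet _ (hxU t)),
      Matrix.one_mulVec]
  have hgq : ∀ t, g (x t) *ᵥ q t = p t := fun t => by
    simp only [q, Matrix.mulVec_mulVec, Matrix.mul_nonsing_inv _ (hdet _ (hxU t)),
      Matrix.one_mulVec]
  have hq : ContDiff ℝ (0 : ℕ) q :=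
    hq_contDiff 0 zero_le_one (contDiff_zero.2 hx.continuous) (contDiff_zero.2 hp.continuous)
  have hx' : deriv x = q := funext fun t => (hx.hasDerivAt_of_ae_eq hq.continuous hvq t).deriv
  have hforce : Continuous fun t => kineticGrad g (x t) (q t) + w t :=
    (continuous_kineticGrad_comp hU hg hx.continuous hxU hq.continuous).add hw
  have hFq : F =ᵐ[volume] fun t => kineticGrad g (x t) (q t) + w t := by
    filter_upwards [hF, hvq] with t hFt hvt
    rw [hFt, hvt]
  have hq1 : ContDiff ℝ (1 : ℕ) q := hq_contDiff 1 le_rfl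
    (by simpa using hx.contDiff_succ_of_ae_eq hq hvq)
    (by simpa using hp.contDiff_succ_of_ae_eq (contDiff_zero.2 hforce) hFq)
  refine ⟨by simpa [one_add_one_eq_two] using hx.contDiff_succ_of_ae_eq hq1 hvq, ?_⟩
  simp_rw [hx', hgq]
  exact hp.hasDerivAt_of_ae_eq hforce hFq

theorem contDiff_two_and_deriv_deriv_add_christoffel (hU : IsOpen U)
    (hg : ∀ i j, ContDiffOn ℝ 1 (fun y => g y i j) U) (hsymm : ∀ y ∈ U, (g y).IsSymm)
    (hdet : ∀ y ∈ U, IsUnit (g y).det)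
    (hx : IsIndefiniteIntegral v x) (hp : IsIndefiniteIntegral F p) (hxU : ∀ t, x t ∈ U)
    (hw : Continuous w) (hpv : p =ᵐ[volume] fun t => g (x t) *ᵥ v t)
    (hF : F =ᵐ[volume] fun t => kineticGrad g (x t) (v t) + w t) :
    ContDiff ℝ 2 x ∧ ∀ t, deriv (deriv x) t + christoffel g (x t) (deriv x t) (deriv x t)
      = (g (x t))⁻¹ *ᵥ w t := by
  obtain ⟨hx2, hmom⟩ := contDiff_two_and_hasDerivAt_momentum hU hg hdet hx hp hxU hw hpv hF
  have hx' : ContDiff ℝ 1 (deriv x) :=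
    (contDiff_succ_iff_deriv.1 (one_add_one_eq_two (R := WithTop ℕ∞) ▸ hx2)).2.2
  refine ⟨hx2, fun t => ?_⟩
  have hUt : U ∈ 𝓝 (x t) := hU.mem_nhds (hxU t)
  exact deriv_deriv_add_christoffel
    (fun i j => ((hg i j).differentiableOn one_ne_zero).differentiableAt hUt)
    (Filter.eventually_of_mem hUt hsymm) (hdet _ (hxU t)) (hx2.differentiable two_ne_zero t)
    (hx'.differentiable one_ne_zero t) (hmom t)

end EulerLagrange

section Torus

variable {k m : ℕ}

/-- The basis of `ℝ^k` spanning the lattice `2πℤ^k`. -/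
noncomputable def torusBasis (k : ℕ) : Module.Basis (Fin k) ℝ (Fin k → ℝ) :=
  (Pi.basisFun ℝ (Fin k)).isUnitSMul (w := fun _ => 2 * π) fun _ => two_pi_pos.ne'.isUnit

theorem torusBasis_repr (x : Fin k → ℝ) (i : Fin k) :
    (torusBasis k).repr x i = x i / (2 * π) := by
  rw [torusBasis, Module.Basis.repr_isUnitSMul, Pi.basisFun_repr, Units.smul_def,
    Units.val_inv_eq_inv_val, IsUnit.unit_spec, smul_eq_mul, div_eq_inv_mul]

theorem mem_span_torusBasis {v : Fin k → ℝ} :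
    v ∈ Submodule.span ℤ (range (torusBasis k)) ↔
      ∃ n : Fin k → ℤ, v = fun i => 2 * π * (n i : ℝ) := by
  simp_rw [Module.Basis.mem_span_iff_repr_mem, torusBasis_repr, mem_range, Classical.skolem,
    funext_iff, algebraMap_int_eq, eq_intCast, eq_div_iff two_pi_pos.ne', mul_comm, eq_comm]

theorem torusPer_iff_isLatticePeriodic {E : Type*} [NormedAddCommGroup E] [NormedSpace ℝ E]
    {f : (Fin k → ℝ) → E} : TorusPer f ↔ IsLatticePeriodic (torusBasis k) f := by
  constructor
  · rintro hf ⟨v, hv⟩ x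
    obtain ⟨n, rfl⟩ := mem_span_torusBasis.1 hv
    simpa only [Submodule.vadd_def, vadd_eq_add, add_comm] using hf x n
  · intro hf x n
    simpa only [Submodule.vadd_def, vadd_eq_add, add_comm] using
      hf ⟨_, mem_span_torusBasis.2 ⟨n, rfl⟩⟩ x

theorem fundamentalDomain_torusBasis_ae_eq :
    ZSpan.fundamentalDomain (torusBasis k) =ᵐ[volume] torusBox k := by
  have hpi : ZSpan.fundamentalDomain (torusBasis k) = univ.pi fun _ => Ico 0 (2 * π) := by
    ext x
    simp only [ZSpan.mem_fundamentalDomain, torusBasis_repr, mem_Ico, mem_univ_pi,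
      div_lt_one two_pi_pos, le_div_iff₀ two_pi_pos, zero_mul]
  rw [hpi]
  exact Measure.univ_pi_Ico_ae_eq_Icc

instance isFiniteMeasure_restrict_torusBox : IsFiniteMeasure (volume.restrict (torusBox k)) :=
  isFiniteMeasure_restrict.2 isCompact_Icc.measure_lt_top.ne

theorem dirDeriv_eq_fderiv {E : Type*} [NormedAddCommGroup E] [NormedSpace ℝ E] {ω φ : Fin k → ℝ}
    {f : (Fin k → ℝ) → E} (hf : DifferentiableAt ℝ f φ) : dirDeriv ω f φ = fderiv ℝ f φ ω :=
  hf.lineDeriv_eq_fderiv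

theorem dirDeriv_single {ω φ : Fin k → ℝ} {η : (Fin k → ℝ) → ℝ} (hη : DifferentiableAt ℝ η φ)
    (i : Fin m) :
    dirDeriv ω (fun ψ => (Pi.single i (η ψ) : Fin m → ℝ)) φ = Pi.single i (fderiv ℝ η φ ω) := by
  have hsingle := (ContinuousLinearMap.single ℝ (fun _ : Fin m => ℝ) i).hasFDerivAt.comp φ
    hη.hasFDerivAt
  exact (dirDeriv_eq_fderiv hsingle.differentiableAt).trans (congrArg (· ω) hsingle.fderiv)

theorem dotp_single (a : Fin m → ℝ) (i : Fin m) (c : ℝ) : dotp a (Pi.single i c) = a i * c :=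
  dotProduct_single a c i

/-- `G` is the weak derivative of `f` along `ω` on the torus. Functions on the torus are encoded as
periodic functions on `ℝ^k`, and both functions are required to be integrable. -/
structure HasTorusWeakDeriv (ω : Fin k → ℝ) (f G : (Fin k → ℝ) → Fin m → ℝ) : Prop where
  torusPer : TorusPer f
  torusPer_deriv : TorusPer G
  integrableOn : IntegrableOn f (torusBox k)
  integrableOn_deriv : IntegrableOn G (torusBox k)
  integral_dotp_dirDeriv : ∀ h : (Fin k → ℝ) → Fin m → ℝ, TorusPer h → ContDiff ℝ (⊤ : ℕ∞) h →
    ∫ φ in torusBox k, dotp (f φ) (dirDeriv ω h φ) = -∫ φ in torusBox k, dotp (G φ) (h φ)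

namespace HasTorusWeakDeriv

variable {ω : Fin k → ℝ} {f G : (Fin k → ℝ) → Fin m → ℝ}

theorem setIntegral_fderiv_smul (hfG : HasTorusWeakDeriv ω f G) {ζ : (Fin k → ℝ) → ℝ}
    (hζper : TorusPer ζ) (hζ : ContDiff ℝ (⊤ : ℕ∞) ζ) :
    ∫ φ in torusBox k, fderiv ℝ ζ φ ω • f φ = -∫ φ in torusBox k, ζ φ • G φ := by
  have hζ' : Continuous fun φ => fderiv ℝ ζ φ ω :=
    (hζ.continuous_fderiv (by simp)).clm_apply continuous_const
  have hf : IntegrableOn (fun φ => fderiv ℝ ζ φ ω • f φ) (torusBox k) :=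
    hfG.integrableOn.continuousOn_smul hζ'.continuousOn isCompact_Icc
  have hG : IntegrableOn (fun φ => ζ φ • G φ) (torusBox k) :=
    hfG.integrableOn_deriv.continuousOn_smul hζ.continuous.continuousOn isCompact_Icc
  ext i
  have hi := hfG.integral_dotp_dirDeriv (fun φ => Pi.single i (ζ φ))
    (fun φ n => congrArg (Pi.single i) (hζper φ n))
    ((ContinuousLinearMap.single ℝ (fun _ : Fin m => ℝ) i).contDiff.comp hζ)
  rw [eval_integral hf.eval, Pi.neg_apply, eval_integral hG.eval]
  simpa only [dirDeriv_single (hζ.differentiable (by simp) _), dotp_single, Pi.smul_apply,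
    smul_eq_mul, mul_comm] using hi

theorem hasWeakDirDeriv (hfG : HasTorusWeakDeriv ω f G) : HasWeakDirDeriv volume ω f G := by
  have hD := fundamentalDomain_torusBasis_ae_eq (k := k)
  have hf := torusPer_iff_isLatticePeriodic.1 hfG.torusPer
  have hG := torusPer_iff_isLatticePeriodic.1 hfG.torusPer_deriv
  have hfi : LocallyIntegrable f := hf.locallyIntegrable (hfG.integrableOn.congr_set_ae hD)
  have hGi : LocallyIntegrable G := hG.locallyIntegrable (hfG.integrableOn_deriv.congr_set_ae hD)
  refine ⟨hfi, hGi, fun η hη hηc => ?_⟩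
  have hη' : Continuous fun x => fderiv ℝ η x ω :=
    (hη.continuous_fderiv (by simp)).clm_apply continuous_const
  have hperiodized := hfG.setIntegral_fderiv_smul
    (torusPer_iff_isLatticePeriodic.2 (isLatticePeriodic_periodization _ η))
    (contDiff_periodization hη hηc)
  simp_rw [fderiv_periodization_apply (hη.differentiable (by simp)) hηc] at hperiodized
  rwa [← setIntegral_congr_set hD, ← setIntegral_congr_set hD,
    setIntegral_periodization_smul hη' (hηc.fderiv_apply ℝ ω) hf hfi,
    setIntegral_periodization_smul hη.continuous hηc hG hGi] at hperiodized

end HasTorusWeakDeriv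

end Torus

section Integrability

variable {α : Type*} [MeasurableSpace α] {μ : Measure α} {m : ℕ} {v : α → Fin m → ℝ}

theorem integrable_comp_smul {X F : Type*} [TopologicalSpace X] [T2Space X] [MeasurableSpace X]
    [BorelSpace X] [NormedAddCommGroup F] [NormedSpace ℝ F] {K : Set X} (hK : IsCompact K)
    {f : X → ℝ} (hf : ContinuousOn f K) {w : α → X} (hw : AEMeasurable w μ)
    (hwK : ∀ᵐ a ∂μ, w a ∈ K) {q : α → F} (hq : Integrable q μ) :
    Integrable (fun a => f (w a) • q a) μ := by
  obtain ⟨M, hM⟩ := hK.exists_bound_of_continuousOn hf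
  have hmeas : AEStronglyMeasurable f (μ.map w) := by
    rw [← Measure.restrict_eq_self_of_ae_mem
      ((ae_map_iff hw hK.isClosed.measurableSet).2 hwK)]
    exact hf.aestronglyMeasurable_of_isCompact hK hK.isClosed.measurableSet
  exact hq.bdd_smul M (hmeas.comp_aemeasurable hw) (hwK.mono fun a ha => hM _ ha)

theorem memLp_two_of_integrable_dotp (hv : AEStronglyMeasurable v μ)
    (h : Integrable (fun a => dotp (v a) (v a)) μ) : MemLp v 2 μ := by
  refine .of_eval fun i => ?_
  have hvi : AEStronglyMeasurable (fun a => v a i) μ :=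
    (continuous_apply i).comp_aestronglyMeasurable hv
  refine (memLp_two_iff_integrable_sq hvi).2 (h.mono' (hvi.pow 2) (.of_forall fun a => ?_))
  rw [norm_of_nonneg (sq_nonneg _), sq]
  exact Finset.single_le_sum (f := fun i => v a i * v a i) (fun j _ => mul_self_nonneg _)
    (Finset.mem_univ i)

theorem integrable_of_ae_mem_isCompact [IsFiniteMeasure μ] {F : Type*} [NormedAddCommGroup F]
    {K : Set F} (hK : IsCompact K) {f : α → F} (hf : AEStronglyMeasurable f μ)
    (hfK : ∀ᵐ a ∂μ, f a ∈ K) : Integrable f μ := by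
  obtain ⟨R, hR⟩ := hK.isBounded.exists_norm_le
  exact .of_bound hf R (hfK.mono fun a ha => hR _ ha)

variable {C : Set (Fin m → ℝ)} {g : (Fin m → ℝ) → Matrix (Fin m) (Fin m) ℝ} {u : α → Fin m → ℝ}

theorem integrable_mulVec_comp (hC : IsCompact C) (hg : ∀ i j, ContinuousOn (fun y => g y i j) C)
    (hu : AEMeasurable u μ) (huC : ∀ᵐ a ∂μ, u a ∈ C) (hv : Integrable v μ) :
    Integrable (fun a => g (u a) *ᵥ v a) μ :=
  .of_eval fun i => integrable_finsetSum Finset.univ fun j _ =>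
    integrable_comp_smul hC (hg i j) hu huC (hv.eval j)

theorem integrable_kineticGrad_comp (hC : IsCompact C)
    (hg : ∀ i j l, ContinuousOn (fun x => pd (fun y => g y i j) x l) C) (hu : AEMeasurable u μ)
    (huC : ∀ᵐ a ∂μ, u a ∈ C) (hv : MemLp v 2 μ) :
    Integrable (fun a => kineticGrad g (u a) (v a)) μ := by
  refine .of_eval fun i => (integrable_finsetSum _ fun j _ => integrable_finsetSum _ fun l _ => ?_)
    |>.const_mul _
  simpa [mul_assoc] using integrable_comp_smul hC (hg j l i) hu huC
    ((hv.eval j).integrable_mul (hv.eval l))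

end Integrability

section WeakSolution

variable {k m : ℕ} {ω : Fin k → ℝ} {U C : Set (Fin m → ℝ)}
  {g : (Fin m → ℝ) → Matrix (Fin m) (Fin m) ℝ} {W : (Fin k → ℝ) → (Fin m → ℝ) → ℝ}
  {u v : (Fin k → ℝ) → Fin m → ℝ}

theorem continuousOn_gradW (hU : IsOpen U)
    (hW : ContDiffOn ℝ 1 (fun p : (Fin k → ℝ) × (Fin m → ℝ) => W p.1 p.2) (univ ×ˢ U)) :
    ContinuousOn (fun p : (Fin k → ℝ) × (Fin m → ℝ) => gradW W p.1 p.2) (univ ×ˢ U) := by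
  have hO : IsOpen ((univ : Set (Fin k → ℝ)) ×ˢ U) := isOpen_univ.prod hU
  refine continuousOn_pi.2 fun i => ContinuousOn.congr
    (f := fun p => fderiv ℝ (fun p : (Fin k → ℝ) × (Fin m → ℝ) => W p.1 p.2) p (0, Pi.single i 1))
    ((hW.continuousOn_fderiv_of_isOpen hO le_rfl).clm_apply continuousOn_const) fun p hp => ?_
  have hWp : HasFDerivAt (fun p : (Fin k → ℝ) × (Fin m → ℝ) => W p.1 p.2) _ (p.1, p.2) :=
    ((hW.differentiableOn one_ne_zero).differentiableAt (hO.mem_nhds hp)).hasFDerivAt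
  exact congrArg (· (Pi.single i 1)) (hWp.comp p.2 (hasFDerivAt_prodMk_right p.1 p.2)).fderiv

theorem integrableOn_gradW (hU : IsOpen U)
    (hW : ContDiffOn ℝ 1 (fun p : (Fin k → ℝ) × (Fin m → ℝ) => W p.1 p.2) (univ ×ˢ U))
    (hC : IsCompact C) (hCU : C ⊆ U) (hu : AEMeasurable u) (huC : ∀ᵐ φ, u φ ∈ C) :
    IntegrableOn (fun φ => gradW W φ (u φ)) (torusBox k) := by
  have hmem : ∀ᵐ φ ∂volume.restrict (torusBox k), (φ, u φ) ∈ torusBox k ×ˢ C := by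
    filter_upwards [ae_restrict_of_ae huC, ae_restrict_mem measurableSet_Icc] with φ hφC hφ
    exact ⟨hφ, hφC⟩
  have hcont := (continuousOn_gradW hU hW).mono (prod_mono (subset_univ (torusBox k)) hCU)
  refine .of_eval fun i => ?_
  simpa using integrable_comp_smul (isCompact_Icc.prod hC) (continuousOn_pi.1 hcont i)
    (aemeasurable_id.prodMk hu.restrict) hmem (integrable_const (1 : ℝ))

theorem integrableOn_dotp {h : (Fin k → ℝ) → Fin m → ℝ} (hv : IntegrableOn v (torusBox k))
    (hh : Continuous h) : IntegrableOn (fun φ => dotp (v φ) (h φ)) (torusBox k) :=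
  integrable_finsetSum _ fun i _ => IntegrableOn.mul_continuousOn (hv.eval i)
    ((continuous_apply i).comp hh).continuousOn isCompact_Icc

theorem hasTorusWeakDeriv_momentum (hU : IsOpen U)
    (hg : ∀ i j, ContDiffOn ℝ 1 (fun y => g y i j) U) (hsymm : ∀ x ∈ U, (g x).IsSymm)
    (hdet : ∀ x ∈ U, IsUnit (g x).det) (hWper : ∀ x, TorusPer fun φ => W φ x)
    (hW : ContDiffOn ℝ 1 (fun p : (Fin k → ℝ) × (Fin m → ℝ) => W p.1 p.2) (univ ×ˢ U))
    (hC : IsCompact C) (hCU : C ⊆ U) (huper : TorusPer u) (hvper : TorusPer v)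
    (hu : AEMeasurable u) (huC : ∀ᵐ φ, u φ ∈ C) (hv : MemLp v 2 (volume.restrict (torusBox k)))
    (hweak : ∀ h : (Fin k → ℝ) → Fin m → ℝ, TorusPer h → ContDiff ℝ (⊤ : ℕ∞) h →
      ∫ φ in torusBox k, (dotp (g (u φ) *ᵥ v φ)
        (dirDeriv ω h φ + christoffel g (u φ) (v φ) (h φ)) + dotp (gradW W φ (u φ)) (h φ)) = 0) :
    HasTorusWeakDeriv ω (fun φ => g (u φ) *ᵥ v φ)
      (fun φ => kineticGrad g (u φ) (v φ) + gradW W φ (u φ)) := by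
  have huC' := ae_restrict_of_ae (s := torusBox k) huC
  have hmomentum : IntegrableOn (fun φ => g (u φ) *ᵥ v φ) (torusBox k) :=
    integrable_mulVec_comp hC (fun i j => (hg i j).continuousOn.mono hCU) hu.restrict huC'
      (hv.integrable one_le_two)
  have hforce : IntegrableOn (fun φ => kineticGrad g (u φ) (v φ) + gradW W φ (u φ)) (torusBox k) :=
    (integrable_kineticGrad_comp hC (fun i j l => (continuousOn_pd hU (hg i j) l).mono hCU)
      hu.restrict huC' hv).add (integrableOn_gradW hU hW hC hCU hu huC)
  refine ⟨fun φ n => by rw [huper, hvper], fun φ n => ?_, hmomentum, hforce, fun h hper hh => ?_⟩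
  · have hWn : W (φ + fun i => 2 * π * (n i : ℝ)) = W φ := funext fun x => hWper x φ n
    simp only [huper φ n, hvper φ n]
    unfold gradW
    rw [hWn]
  · have hh1 : Differentiable ℝ h := hh.differentiable (by simp)
    have hh' : Continuous (dirDeriv ω h) :=
      ((hh.continuous_fderiv (by simp)).clm_apply continuous_const).congr fun φ =>
        (dirDeriv_eq_fderiv (hh1 φ)).symm
    rw [eq_neg_iff_add_eq_zero, ← integral_add (integrableOn_dotp hmomentum hh')
      (integrableOn_dotp hforce hh.continuous), ← hweak h hper hh]
    refine integral_congr_ae (huC'.mono fun φ hφ => ?_)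
    have hadd : ∀ a b c : Fin m → ℝ, dotp a (b + c) = dotp a b + dotp a c := dotProduct_add
    have hadd' : ∀ a b c : Fin m → ℝ, dotp (a + b) c = dotp a c + dotp b c := add_dotProduct
    simp only [hadd, hadd', dotp_mulVec_christoffel (hsymm _ (hCU hφ)) (hdet _ (hCU hφ)), add_assoc]

theorem ae_exists_eulerLagrange_solution (hU : IsOpen U)
    (hg : ∀ i j, ContDiffOn ℝ 1 (fun y => g y i j) U) (hsymm : ∀ x ∈ U, (g x).IsSymm)
    (hdet : ∀ x ∈ U, IsUnit (g x).det)
    (hW : ContDiffOn ℝ 1 (fun p : (Fin k → ℝ) × (Fin m → ℝ) => W p.1 p.2) (univ ×ˢ U))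
    (hC : IsClosed C) (hCU : C ⊆ U) (huC : ∀ᵐ φ, u φ ∈ C) (hu : HasTorusWeakDeriv ω u v)
    (hmomentum : HasTorusWeakDeriv ω (fun φ => g (u φ) *ᵥ v φ)
      (fun φ => kineticGrad g (u φ) (v φ) + gradW W φ (u φ))) :
    ∀ᵐ φ : Fin k → ℝ, ∃ x : ℝ → Fin m → ℝ, ContDiff ℝ 2 x ∧ x 0 = u φ ∧
      (fun t : ℝ => u (φ + t • ω)) =ᵐ[volume] x ∧ (∀ t, x t ∈ C) ∧
      ∀ t, deriv (deriv x) t + christoffel g (x t) (deriv x t) (deriv x t)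
        = (g (x t))⁻¹ *ᵥ gradW W (φ + t • ω) (x t) := by
  filter_upwards [hu.hasWeakDirDeriv.ae_exists_isIndefiniteIntegral,
    hmomentum.hasWeakDirDeriv.ae_exists_isIndefiniteIntegral,
    ae_ae_flow huC ω] with φ hxφ hpφ hφC
  obtain ⟨x, hx, hx0, hux⟩ := hxφ
  obtain ⟨p, hp, -, hPp⟩ := hpφ
  have hxC : ∀ t, x t ∈ C := forall_mem_of_ae_mem hC hx.continuous <| by
    filter_upwards [hux, hφC] with t ht htC
    rwa [← ht]
  have hw : Continuous fun t => gradW W (φ + t • ω) (x t) :=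
    (continuousOn_gradW hU hW).comp_continuous (f := fun t => (φ + t • ω, x t))
      (by have := hx.continuous; fun_prop) fun t => ⟨mem_univ _, hCU (hxC t)⟩
  have hpv : p =ᵐ[volume] fun t => g (x t) *ᵥ v (φ + t • ω) := by
    filter_upwards [hux, hPp] with t ht htP
    rw [← htP, ht]
  obtain ⟨hx2, hxEL⟩ := contDiff_two_and_deriv_deriv_add_christoffel hU hg hsymm hdet hx hp
    (fun t => hCU (hxC t)) hw hpv (hux.mono fun t ht => by simp only [ht])
  exact ⟨x, hx2, hx0, hux, hxC, hxEL⟩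

end WeakSolution

theorem stmt1_general {k m : ℕ} (ω : Fin k → ℝ)
    (U : Set (Fin m → ℝ)) (hU : IsOpen U)
    (g : (Fin m → ℝ) → Matrix (Fin m) (Fin m) ℝ)
    (hg : ∀ i j, ContDiffOn ℝ 1 (fun y => g y i j) U)
    (hsymm : ∀ x ∈ U, (g x).IsSymm) (hdet : ∀ x ∈ U, IsUnit (g x).det)
    (W : (Fin k → ℝ) → (Fin m → ℝ) → ℝ) (hWper : ∀ x, TorusPer fun φ => W φ x)
    (hW : ContDiffOn ℝ 1 (fun p : (Fin k → ℝ) × (Fin m → ℝ) => W p.1 p.2) (univ ×ˢ U))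
    (C : Set (Fin m → ℝ)) (hC : IsCompact C) (hCU : C ⊆ U)
    (u Du : (Fin k → ℝ) → Fin m → ℝ) (huper : TorusPer u) (hDuper : TorusPer Du)
    (humeas : AEMeasurable u) (hDumeas : AEMeasurable Du)
    (hDuL2 : IntegrableOn (fun φ => dotp (Du φ) (Du φ)) (torusBox k))
    (hweakder : ∀ h : (Fin k → ℝ) → Fin m → ℝ, TorusPer h → ContDiff ℝ (⊤ : ℕ∞) h →
      ∫ φ in torusBox k, dotp (u φ) (dirDeriv ω h φ) = -∫ φ in torusBox k, dotp (Du φ) (h φ))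
    (huC : ∀ᵐ φ : Fin k → ℝ, u φ ∈ C)
    (hweak : ∀ h : (Fin k → ℝ) → Fin m → ℝ, TorusPer h → ContDiff ℝ (⊤ : ℕ∞) h →
      ∫ φ in torusBox k, (dotp (g (u φ) *ᵥ Du φ)
        (dirDeriv ω h φ + christoffel g (u φ) (Du φ) (h φ)) + dotp (gradW W φ (u φ)) (h φ)) = 0) :
    ∃ u' : (Fin k → ℝ) → Fin m → ℝ, TorusPer u' ∧ (∀ᵐ φ : Fin k → ℝ, u' φ = u φ) ∧
      ∀ᵐ φ : Fin k → ℝ,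
        (∀ t : ℝ, u' (φ + t • ω) ∈ C) ∧
        ContDiff ℝ 2 (fun t : ℝ => u' (φ + t • ω)) ∧
        ∀ t : ℝ,
          deriv (deriv fun s : ℝ => u' (φ + s • ω)) t
            + christoffel g (u' (φ + t • ω)) (deriv (fun s : ℝ => u' (φ + s • ω)) t)
                (deriv (fun s : ℝ => u' (φ + s • ω)) t)
            = (g (u' (φ + t • ω)))⁻¹ *ᵥ gradW W (φ + t • ω) (u' (φ + t • ω)) := by
  have hDu : MemLp Du 2 (volume.restrict (torusBox k)) :=
    memLp_two_of_integrable_dotp hDumeas.aestronglyMeasurable.restrict hDuL2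
  have hu : HasTorusWeakDeriv ω u Du :=
    ⟨huper, hDuper, integrable_of_ae_mem_isCompact hC humeas.restrict.aestronglyMeasurable
      (ae_restrict_of_ae huC), hDu.integrable one_le_two, hweakder⟩
  have hmomentum := hasTorusWeakDeriv_momentum hU hg hsymm hdet hWper hW hC hCU huper hDuper humeas
    huC hDu hweak
  have horbit := ae_exists_eulerLagrange_solution hU hg hsymm hdet hW hC.isClosed hCU huC hu
    hmomentum
  refine ⟨flowRep ω u, fun φ n => flowRep_add_of_periodic (fun ψ => huper ψ n) φ, ?_, ?_⟩
  · filter_upwards [horbit] with φ ⟨x, hx, hx0, hux, _⟩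
    simpa [hx0] using flowRep_add_smul hx.continuous hux 0
  · filter_upwards [horbit] with φ ⟨x, hx, _, hux, hxC, hxEL⟩
    simp_rw [flowRep_add_smul hx.continuous hux]
    exact ⟨hxC, hx, hxEL⟩

/-- Weak quasiperiodic solutions restrict to classical solutions along almost every
trajectory of the linear flow (single-chart form): if `u ∈ H¹_ω(𝕋^k;ℝ^m)` takes values
a.e. in a compact `C ⊂ U` and satisfies the weak variational identity, then some
representative `u'` of `u` is such that for a.e. `φ` the function `t ↦ u'(φ+tω)` takes
values in `C`, is `C²` on all of `ℝ`, and solves the Euler–Lagrange equations. -/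
theorem stmt1 {k m : ℕ} (ω : Fin k → ℝ)
    (U : Set (Fin m → ℝ)) (hU : IsOpen U)
    (g : (Fin m → ℝ) → Matrix (Fin m) (Fin m) ℝ)
    (hg : ∀ i j, ContDiffOn ℝ (⊤ : ℕ∞) (fun y => g y i j) U)
    (hgpos : ∀ x ∈ U, (g x).PosDef)
    (W : (Fin k → ℝ) → (Fin m → ℝ) → ℝ)
    (hWper : ∀ x, TorusPer (fun φ => W φ x))
    (hW : ContDiffOn ℝ (⊤ : ℕ∞) (fun p : (Fin k → ℝ) × (Fin m → ℝ) => W p.1 p.2)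
      (Set.univ ×ˢ U))
    (C : Set (Fin m → ℝ)) (hC : IsCompact C) (hCU : C ⊆ U)
    -- `u ∈ H¹_ω(𝕋^k;ℝ^m)` with weak directional derivative `Du`:
    (u Du : (Fin k → ℝ) → (Fin m → ℝ)) (huper : TorusPer u) (hDuper : TorusPer Du)
    (humeas : Measurable u) (hDumeas : Measurable Du)
    (huL2 : IntegrableOn (fun φ => dotp (u φ) (u φ)) (torusBox k))
    (hDuL2 : IntegrableOn (fun φ => dotp (Du φ) (Du φ)) (torusBox k))
    (hweakder : ∀ h : (Fin k → ℝ) → (Fin m → ℝ), TorusPer h → ContDiff ℝ 1 h →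
      ∫ φ in torusBox k, dotp (u φ) (dirDeriv ω h φ)
        = - ∫ φ in torusBox k, dotp (Du φ) (h φ))
    -- `u` takes values almost everywhere in `C`:
    (huC : ∀ᵐ φ : Fin k → ℝ, u φ ∈ C)
    -- the weak variational identity for every smooth `h : 𝕋^k → ℝ^m`:
    (hweak : ∀ h : (Fin k → ℝ) → (Fin m → ℝ), TorusPer h → ContDiff ℝ (⊤ : ℕ∞) h →
      ∫ φ in torusBox k,
        (dotp (Matrix.mulVec (g (u φ)) (Du φ))
            (dirDeriv ω h φ + christoffel g (u φ) (Du φ) (h φ))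
          + dotp (gradW W φ (u φ)) (h φ)) = 0) :
    ∃ u' : (Fin k → ℝ) → (Fin m → ℝ), TorusPer u' ∧ (∀ᵐ φ : Fin k → ℝ, u' φ = u φ) ∧
      (∀ᵐ φ : Fin k → ℝ,
        (∀ t : ℝ, u' (φ + t • ω) ∈ C) ∧
        ContDiff ℝ 2 (fun t : ℝ => u' (φ + t • ω)) ∧
        (∀ t : ℝ,
          deriv (deriv (fun s : ℝ => u' (φ + s • ω))) t
            + christoffel g (u' (φ + t • ω)) (deriv (fun s : ℝ => u' (φ + s • ω)) t)
                (deriv (fun s : ℝ => u' (φ + s • ω)) t)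
            = Matrix.mulVec (g (u' (φ + t • ω)))⁻¹
                (gradW W (φ + t • ω) (u' (φ + t • ω))))) :=
  stmt1_general ω U hU g (fun i j => (hg i j).of_le (by simp))
    (fun x hx => Matrix.isHermitian_iff_isSymm.1 (hgpos x hx).isHermitian)
    (fun x hx => (hgpos x hx).det_pos.ne'.isUnit) W hWper (hW.of_le (by simp)) C hC hCU u Du huper
    hDuper humeas.aemeasurable hDumeas.aemeasurable hDuL2
    (fun h hper hh => hweakder h hper (hh.of_le (by simp))) huC hweak
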